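/- arXiv:0706.0750 — 2 statements merged into one kernel-verified Lean document; each statement's English description precedes it below -/
import Mathlib

section
/- Fix an integer n ≥ 2 and positive real numbers p(k,j) > 0 for k ∈ {1,…,n} and integers j ≥ 1. Then s₁ = ∏_{k=1}^n p(k,1), and for every q ≥ 2, s_q / ∏_{j=1}^{q−1} s_j^{n−1} = ( ∏_{k=1}^n ∏_{j=1}^{q−1} p(k,j)^{(n−1)·n^{q−j−1}} ) · ( ∏_{k=1}^n p(k,q) ). -/
/-- The weight `t(w)` of a word `w` over the alphabet `Fin n`: if
`w = i₁^{j₁} i₂^{j₂} ⋯ i_m^{j_m}` is the run decomposition of `w` (consecutive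
letters in different runs are distinct), then `t(w) = ∏_t p (i_t) (j_t)`. -/
noncomputable def runProd {n : ℕ} (p : Fin n → ℕ → ℝ) (w : List (Fin n)) : ℝ :=
  ((w.splitBy (· == ·)).map (fun r =>
    match r with
    | [] => 1
    | a :: t => p a (t.length + 1))).prod

/-- `sWord n p q = ∏_w t(w)`, the product over all `n^q` words `w` of length `q`. -/
noncomputable def sWord (n : ℕ) (p : Fin n → ℕ → ℝ) (q : ℕ) : ℝ :=
  ∏ f : Fin q → Fin n, runProd p (List.ofFn f)

open Finset

section RunProduct

variable {n : ℕ} (p : Fin n → ℕ → ℝ)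

theorem runProd_append_cons_of_getLast_ne {u : List (Fin n)} {l : Fin n}
    (h : ∀ x ∈ u.getLast?, x ≠ l) (v : List (Fin n)) :
    runProd p (u ++ l :: v) = runProd p u * runProd p (l :: v) := by
  unfold runProd
  rw [List.splitBy_append_cons v (by simpa using h), List.map_append, List.prod_append]

theorem runProd_replicate_succ (k : Fin n) (m : ℕ) :
    runProd p (List.replicate (m + 1) k) = p k (m + 1) := by
  unfold runProd
  rw [List.splitBy_of_isChain (by simp) (List.isChain_replicate_of_rel _ (by simp))]
  simp [List.replicate_succ]

theorem runProd_replicate_succ_append_cons {k l : Fin n} (hkl : l ≠ k) (m : ℕ)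
    (v : List (Fin n)) :
    runProd p (List.replicate (m + 1) k ++ l :: v) = p k (m + 1) * runProd p (l :: v) := by
  rw [runProd_append_cons_of_getLast_ne, runProd_replicate_succ]
  simpa [List.getLast?_replicate] using hkl.symm

theorem runProd_pos (hp : ∀ k, ∀ j, 1 ≤ j → 0 < p k j) (w : List (Fin n)) :
    0 < runProd p w := by
  refine List.prod_pos fun x hx => ?_
  obtain ⟨r, -, rfl⟩ := List.mem_map.1 hx
  rcases r with _ | ⟨a, t⟩
  · exact one_pos
  · exact hp a _ (Nat.le_add_left 1 _)

theorem sWord_pos (hp : ∀ k, ∀ j, 1 ≤ j → 0 < p k j) (q : ℕ) : 0 < sWord n p q :=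
  prod_pos fun _ _ => runProd_pos p hp _

theorem prod_ofFn_succ (g : List (Fin n) → ℝ) (q : ℕ) :
    ∏ f : Fin (q + 1) → Fin n, g (List.ofFn f)
      = ∏ l, ∏ f : Fin q → Fin n, g (l :: List.ofFn f) := by
  rw [← (Fin.consEquiv fun _ => Fin n).prod_comp, Fintype.prod_prod_type]
  simp [Fin.consEquiv, List.ofFn_succ]

/-- The product of the weights of all words consisting of `m` letters `k` followed by an
arbitrary word of length `q`. -/
noncomputable def replicateAppendProd (k : Fin n) (m q : ℕ) : ℝ :=
  ∏ f : Fin q → Fin n, runProd p (List.replicate m k ++ List.ofFn f)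

theorem prod_replicateAppendProd_one (q : ℕ) :
    ∏ k, replicateAppendProd p k 1 q = sWord n p (q + 1) :=
  (prod_ofFn_succ (runProd p) q).symm

theorem replicateAppendProd_zero (k : Fin n) (m : ℕ) :
    replicateAppendProd p k (m + 1) 0 = p k (m + 1) := by
  simp [replicateAppendProd, runProd_replicate_succ]

/-- Split according to whether the letter after the initial block continues the run. -/
theorem replicateAppendProd_succ (k : Fin n) (m q : ℕ) :
    replicateAppendProd p k (m + 1) (q + 1)
      = replicateAppendProd p k (m + 2) q
        * (p k (m + 1) ^ ((n - 1) * n ^ q)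
          * ∏ l ∈ univ.erase k, replicateAppendProd p l 1 q) := by
  unfold replicateAppendProd
  rw [prod_ofFn_succ fun v => runProd p (List.replicate (m + 1) k ++ v),
    ← mul_prod_erase univ _ (mem_univ k)]
  congr 1
  · refine prod_congr rfl fun f _ => ?_
    rw [List.replicate_succ' (n := m + 1)]
    simp
  · have hl : ∀ l ∈ univ.erase k,
        ∏ f : Fin q → Fin n, runProd p (List.replicate (m + 1) k ++ l :: List.ofFn f)
          = p k (m + 1) ^ n ^ q
            * ∏ f : Fin q → Fin n, runProd p (List.replicate 1 l ++ List.ofFn f) := by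
      intro l hl
      simp [runProd_replicate_succ_append_cons p (ne_of_mem_erase hl), prod_mul_distrib]
    rw [prod_congr rfl hl, prod_mul_distrib, prod_const, card_erase_of_mem (mem_univ k),
      card_univ, Fintype.card_fin, ← pow_mul, mul_comm (n ^ q)]

theorem prod_prod_erase {ι : Type*} [Fintype ι] [DecidableEq ι] (g : ι → ℝ) :
    ∏ k, ∏ l ∈ univ.erase k, g l = (∏ l, g l) ^ (Fintype.card ι - 1) := by
  rw [prod_comm' (t' := univ) (s' := fun l => univ.erase l) (by simp [eq_comm]), ← prod_pow]
  simp [card_erase_of_mem]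

theorem prod_replicateAppendProd_succ (m q : ℕ) :
    ∏ k, replicateAppendProd p k (m + 1) (q + 1)
      = (∏ k, replicateAppendProd p k (m + 2) q)
        * ((∏ k, p k (m + 1) ^ ((n - 1) * n ^ q)) * sWord n p (q + 1) ^ (n - 1)) := by
  simp_rw [replicateAppendProd_succ, prod_mul_distrib, prod_prod_erase,
    prod_replicateAppendProd_one, Fintype.card_fin]

theorem prod_replicateAppendProd (m q : ℕ) :
    ∏ k, replicateAppendProd p k (m + 1) q
      = (∏ i ∈ range q, ∏ k, p k (m + i + 1) ^ ((n - 1) * n ^ (q - i - 1)))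
        * (∏ k, p k (m + q + 1)) * ∏ i ∈ range q, sWord n p (i + 1) ^ (n - 1) := by
  induction q generalizing m with
  | zero => simp [replicateAppendProd_zero]
  | succ q ih =>
    rw [prod_replicateAppendProd_succ, ih (m + 1), prod_range_succ', prod_range_succ _ q]
    have hi : ∀ i, q + 1 - (i + 1) - 1 = q - i - 1 := by omega
    simp only [hi, add_right_comm m 1, ← add_assoc, add_zero, Nat.sub_zero,
      Nat.add_sub_cancel]
    ring

theorem sWord_succ (q : ℕ) :
    sWord n p (q + 1)
      = (∏ k, ∏ j ∈ Icc 1 q, p k j ^ ((n - 1) * n ^ (q + 1 - j - 1)))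
        * (∏ k, p k (q + 1)) * ∏ j ∈ Icc 1 q, sWord n p j ^ (n - 1) := by
  have hIcc : ∀ g : ℕ → ℝ, ∏ j ∈ Icc 1 q, g j = ∏ i ∈ range q, g (i + 1) := fun g => by
    rw [range_eq_Ico, prod_Ico_add' g 0 q 1, zero_add, Ico_add_one_right_eq_Icc]
  have h := prod_replicateAppendProd p 0 q
  rw [zero_add, prod_replicateAppendProd_one] at h
  rw [h, prod_comm]
  simp only [hIcc, zero_add, Nat.add_sub_add_right]

end RunProduct

/-- For an integer `n ≥ 2` and positive reals `p(k,j)` (`1 ≤ k ≤ n`,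
`j ≥ 1`), one has `s₁ = ∏_k p(k,1)` and, for every `q ≥ 2`,
`s_q / ∏_{j=1}^{q-1} s_j^(n-1)
  = (∏_{k=1}^n ∏_{j=1}^{q-1} p(k,j)^((n-1)·n^(q-j-1))) · ∏_{k=1}^n p(k,q)`. -/
theorem stmt_5 (n : ℕ) (hn : 2 ≤ n) (p : Fin n → ℕ → ℝ)
    (hp : ∀ k, ∀ j, 1 ≤ j → 0 < p k j) :
    sWord n p 1 = ∏ k, p k 1 ∧
    ∀ q, 2 ≤ q →
      sWord n p q / ∏ j ∈ Finset.Icc 1 (q - 1), (sWord n p j) ^ (n - 1)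
        = (∏ k, ∏ j ∈ Finset.Icc 1 (q - 1), (p k j) ^ ((n - 1) * n ^ (q - j - 1)))
            * ∏ k, p k q := by
  constructor
  · simpa using sWord_succ p 0
  · intro q hq
    obtain ⟨q, rfl⟩ : ∃ r, q = r + 1 := ⟨q - 1, by omega⟩
    rw [div_eq_iff (prod_pos fun j _ => pow_pos (sWord_pos p hp j) _).ne', Nat.add_sub_cancel]
    exact sWord_succ p q
end

section
/- Fix an integer n ≥ 2 and positive real numbers p(k,j) > 0 for k ∈ {1,…,n} and integers j ≥ 1. For q ≥ 2 set d_q = (n−1)·Σ_{k=1}^n Σ_{j=1}^{q−1} n^{q−j−1}·log p(k,j) + Σ_{k=1}^n log p(k,q). Then log s₁ = Σ_{k=1}^n log p(k,1), and for every q ≥ 2, log s_q = (n−1)·n^{q−2}·log s₁ + d_q + (n−1)·Σ_{j=2}^{q−1} n^{q−1−j}·d_j. -/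
/-- The weight of the word `a^j w`, where `j` counts the letters `a` already read. -/
noncomputable def pendingRunProd {n : ℕ} (p : Fin n → ℕ → ℝ) :
    Fin n → ℕ → List (Fin n) → ℝ
  | a, j, [] => p a j
  | a, j, b :: w =>
    if a = b then pendingRunProd p a (j + 1) w else p a j * pendingRunProd p b 1 w

theorem pendingRunProd_pos {n : ℕ} (p : Fin n → ℕ → ℝ) (hp : ∀ k, ∀ j, 1 ≤ j → 0 < p k j)
    (w : List (Fin n)) (a : Fin n) (j : ℕ) (hj : 1 ≤ j) : 0 < pendingRunProd p a j w := by
  induction w generalizing a j with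
  | nil => exact hp a j hj
  | cons b w ih =>
    rw [pendingRunProd]
    split_ifs
    · exact ih a (j + 1) (by omega)
    · exact mul_pos (hp a j hj) (ih b 1 le_rfl)

theorem prod_map_splitBy_loop {n : ℕ} (p : Fin n → ℕ → ℝ) (f : List (Fin n) → ℝ)
    (hf : ∀ a j, f (List.replicate (j + 1) a) = p a (j + 1)) (w : List (Fin n)) (a : Fin n)
    (j : ℕ) (gs : List (List (Fin n))) :
    ((List.splitBy.loop (· == ·) w a (List.replicate j a) gs).map f).prod =
      (gs.map f).prod * pendingRunProd p a (j + 1) w := by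
  have hrev : ∀ c i, f ((c :: List.replicate i c).reverse) = p c (i + 1) := fun c i => by
    rw [← List.replicate_succ, List.reverse_replicate, hf]
  induction w generalizing a j gs with
  | nil =>
    rw [List.splitBy.loop, List.map_reverse, List.prod_reverse, List.map_cons, List.prod_cons,
      hrev, pendingRunProd, mul_comm]
  | cons b w ih =>
    by_cases hab : a = b
    · subst hab
      have := ih a (j + 1) gs
      simpa [List.splitBy.loop, pendingRunProd, List.replicate_succ] using this
    · have := ih b 0 ((a :: List.replicate j a).reverse :: gs)
      rw [List.map_cons, List.prod_cons, hrev] at this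
      have hbeq : (a == b) = false := by simpa using hab
      rw [List.splitBy.loop, hbeq, pendingRunProd, if_neg hab]
      simp only [List.replicate_zero] at this
      rw [this]
      ring

theorem runProd_cons {n : ℕ} (p : Fin n → ℕ → ℝ) (a : Fin n) (w : List (Fin n)) :
    runProd p (a :: w) = pendingRunProd p a 1 w := by
  have := prod_map_splitBy_loop p (fun r => match r with
    | [] => 1
    | a :: t => p a (t.length + 1)) (fun a j => by simp [List.replicate_succ]) w a 0 []
  simpa [runProd, List.splitBy] using this

theorem sum_fin_succ_arrow {n q : ℕ} (g : (Fin (q + 1) → Fin n) → ℝ) :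
    ∑ f, g f = ∑ a, ∑ f : Fin q → Fin n, g (Fin.cons a f) := by
  rw [← Fintype.sum_prod_type']
  exact (Fintype.sum_equiv (Fin.consEquiv fun _ => Fin n) _ _ fun _ => rfl).symm

theorem log_sWord_succ {n : ℕ} (p : Fin n → ℕ → ℝ) (hp : ∀ k, ∀ j, 1 ≤ j → 0 < p k j)
    (q : ℕ) : Real.log (sWord n p (q + 1)) =
      ∑ a, ∑ f : Fin q → Fin n, Real.log (pendingRunProd p a 1 (List.ofFn f)) := by
  rw [sWord, Real.log_prod, sum_fin_succ_arrow]
  · simp only [List.ofFn_cons, runProd_cons]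
  · intro f _
    rw [List.ofFn_succ, runProd_cons]
    exact (pendingRunProd_pos p hp _ _ _ le_rfl).ne'

/-- The sum over all words `a^j w` with `w` of length `q` of the contribution of the first run,
where a run of length `i` contributes `A i` in total over the alphabet. -/
noncomputable def firstRunSum (n : ℕ) (A : ℕ → ℝ) (q j : ℕ) : ℝ :=
  ((n : ℝ) - 1) * ∑ i ∈ Finset.range q, (n : ℝ) ^ (q - 1 - i) * A (j + i) + A (j + q)

theorem firstRunSum_succ (n : ℕ) (A : ℕ → ℝ) (q j : ℕ) :
    firstRunSum n A (q + 1) j =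
      firstRunSum n A q (j + 1) + (n : ℝ) ^ q * ((n : ℝ) - 1) * A j := by
  have h : ∀ i, q - 1 - i = q - (i + 1) := fun i => by omega
  have h' : ∀ i, j + 1 + i = j + (i + 1) := fun i => by omega
  simp only [firstRunSum, Finset.sum_range_succ', h, h', Nat.add_sub_cancel, Nat.sub_zero,
    Nat.add_zero]
  ring

theorem sum_log_pendingRunProd_succ {n : ℕ} (p : Fin n → ℕ → ℝ)
    (hp : ∀ k, ∀ j, 1 ≤ j → 0 < p k j) (q j : ℕ) (hj : 1 ≤ j) :
    ∑ a, ∑ f : Fin (q + 1) → Fin n, Real.log (pendingRunProd p a j (List.ofFn f)) =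
      ∑ a, ∑ f : Fin q → Fin n, Real.log (pendingRunProd p a (j + 1) (List.ofFn f)) +
      (n : ℝ) ^ q * ((n : ℝ) - 1) * ∑ a, Real.log (p a j) +
      ((n : ℝ) - 1) *
        ∑ a, ∑ f : Fin q → Fin n, Real.log (pendingRunProd p a 1 (List.ofFn f)) := by
  have hlog : ∀ a b : Fin n, ∑ f : Fin q → Fin n,
      Real.log (pendingRunProd p a j (List.ofFn (Fin.cons b f : Fin (q + 1) → Fin n))) =
      (if a = b then ∑ f : Fin q → Fin n, Real.log (pendingRunProd p a (j + 1) (List.ofFn f))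
          - (n : ℝ) ^ q * Real.log (p a j)
          - ∑ f : Fin q → Fin n, Real.log (pendingRunProd p a 1 (List.ofFn f)) else 0) +
        ((n : ℝ) ^ q * Real.log (p a j) +
          ∑ f : Fin q → Fin n, Real.log (pendingRunProd p b 1 (List.ofFn f))) := by
    intro a b
    simp only [List.ofFn_cons, pendingRunProd]
    split_ifs with hab
    · subst hab
      ring
    · simp only [Real.log_mul (hp a j hj).ne' (pendingRunProd_pos p hp _ b 1 le_rfl).ne',
        Finset.sum_add_distrib]
      simp
  simp only [sum_fin_succ_arrow, hlog, Finset.sum_add_distrib, Finset.sum_ite_eq,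
    Finset.mem_univ, if_true, Finset.sum_sub_distrib, Finset.sum_const, Finset.card_univ,
    Fintype.card_fin, nsmul_eq_mul, ← Finset.mul_sum]
  ring

theorem sum_log_pendingRunProd {n : ℕ} (p : Fin n → ℕ → ℝ)
    (hp : ∀ k, ∀ j, 1 ≤ j → 0 < p k j) (q j : ℕ) (hj : 1 ≤ j) :
    ∑ a, ∑ f : Fin q → Fin n, Real.log (pendingRunProd p a j (List.ofFn f)) =
      firstRunSum n (fun i => ∑ k, Real.log (p k i)) q j + ((n : ℝ) - 1) *
        ∑ i ∈ Finset.range q,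
          (n : ℝ) ^ (q - 1 - i) * firstRunSum n (fun i => ∑ k, Real.log (p k i)) i 1 := by
  induction q generalizing j with
  | zero => simp [pendingRunProd, firstRunSum]
  | succ q ih =>
    have hpow : ∑ i ∈ Finset.range q, (n : ℝ) ^ (q + 1 - 1 - i) *
          firstRunSum n (fun i => ∑ k, Real.log (p k i)) i 1 =
        n * ∑ i ∈ Finset.range q, (n : ℝ) ^ (q - 1 - i) *
          firstRunSum n (fun i => ∑ k, Real.log (p k i)) i 1 := by
      rw [Finset.mul_sum]
      refine Finset.sum_congr rfl fun i hi => ?_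
      have hi := Finset.mem_range.mp hi
      rw [show q + 1 - 1 - i = q - 1 - i + 1 by omega, pow_succ]
      ring
    rw [sum_log_pendingRunProd_succ p hp q j hj, ih (j + 1) (by omega), ih 1 le_rfl,
      firstRunSum_succ, Finset.sum_range_succ, hpow]
    simp only [Nat.add_sub_cancel, Nat.sub_self, pow_zero]
    ring

theorem sum_Icc_one_eq_sum_range (g : ℕ → ℝ) (q : ℕ) :
    ∑ j ∈ Finset.Icc 1 q, g j = ∑ i ∈ Finset.range q, g (1 + i) := by
  rw [← Finset.Ico_add_one_right_eq_Icc, Finset.sum_Ico_eq_sum_range, Nat.add_sub_cancel]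

/-- With `d_q = (n-1)·Σ_{k=1}^n Σ_{j=1}^{q-1} n^(q-j-1)·log p(k,j)
  + Σ_{k=1}^n log p(k,q)` for `q ≥ 2`, one has `log s₁ = Σ_k log p(k,1)` and, for `q ≥ 2`,
`log s_q = (n-1)·n^(q-2)·log s₁ + d_q + (n-1)·Σ_{j=2}^{q-1} n^(q-1-j)·d_j`. -/
theorem stmt_6 (n : ℕ) (hn : 2 ≤ n) (p : Fin n → ℕ → ℝ)
    (hp : ∀ k, ∀ j, 1 ≤ j → 0 < p k j)
    (d : ℕ → ℝ)
    (hd : ∀ q, 2 ≤ q →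
      d q = ((n : ℝ) - 1) * ∑ k, ∑ j ∈ Finset.Icc 1 (q - 1),
              (n : ℝ) ^ (q - j - 1) * Real.log (p k j)
            + ∑ k, Real.log (p k q)) :
    Real.log (sWord n p 1) = ∑ k, Real.log (p k 1) ∧
    ∀ q, 2 ≤ q →
      Real.log (sWord n p q)
        = ((n : ℝ) - 1) * (n : ℝ) ^ (q - 2) * Real.log (sWord n p 1)
            + d q
            + ((n : ℝ) - 1) * ∑ j ∈ Finset.Icc 2 (q - 1), (n : ℝ) ^ (q - 1 - j) * d j := by
  have hs : ∀ q, Real.log (sWord n p (q + 1)) =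
      firstRunSum n (fun j => ∑ k, Real.log (p k j)) q 1 + ((n : ℝ) - 1) *
        ∑ i ∈ Finset.range q,
          (n : ℝ) ^ (q - 1 - i) * firstRunSum n (fun j => ∑ k, Real.log (p k j)) i 1 := by
    intro q
    rw [log_sWord_succ p hp, sum_log_pendingRunProd p hp q 1 le_rfl]
  have hs₁ : Real.log (sWord n p 1) = ∑ k, Real.log (p k 1) := by
    simpa [firstRunSum] using hs 0
  have hd' : ∀ q, d (q + 2) = firstRunSum n (fun j => ∑ k, Real.log (p k j)) (q + 1) 1 := by
    intro q
    rw [hd (q + 2) (by omega), Finset.sum_comm, show q + 2 - 1 = q + 1 by omega,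
      sum_Icc_one_eq_sum_range, firstRunSum]
    have hexp : ∀ i, q + 2 - (1 + i) - 1 = q + 1 - 1 - i := fun i => by omega
    simp only [hexp, ← Finset.mul_sum, show 1 + (q + 1) = q + 2 by omega]
  refine ⟨hs₁, fun q hq => ?_⟩
  obtain ⟨r, rfl⟩ := Nat.exists_eq_add_of_le' hq
  have hexp : ∀ i, r + 2 - 1 - (i + 2) = r - (i + 1) := fun i => by omega
  have hzero : firstRunSum n (fun j => ∑ k, Real.log (p k j)) 0 1 = ∑ k, Real.log (p k 1) := by
    simp [firstRunSum]
  rw [hs (r + 1), hs₁, hd', Finset.sum_range_succ', hzero, ← Finset.Ico_add_one_right_eq_Icc,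
    Finset.sum_Ico_eq_sum_range, show r + 2 - 1 + 1 - 2 = r by omega]
  simp only [hexp, Nat.add_comm 2, hd', Nat.add_sub_cancel, Nat.sub_zero]
  ring
end
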